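/- Let D be an integer with D > (48 log 6)³ + 3 and σ, R > 0 with R² > σ²(D−3). Set s⋆ = √(R² − σ²(D−3)), ν² = σ⁴(D−3)/(2s⋆²), ν̄ = √(ν² + σ²), and C(D) = ((D−3)/2)^{(D−3)/2} e^{−(D−3)/2} / Γ((D−1)/2). Suppose 24 log(6) · σ² D^{2/3} ≤ s⋆² ≤ 3σ²D. Then for every s with |s − s⋆| ≤ (1/6) σ (D−3)^{1/6}, the convolution [φ ∗ (−h')](s) satisfies (1/(16e)) · C(D) · (ν/ν̄) · (s⋆/σ²) · exp(−(s−s⋆)²/(2ν̄²)) ≤ [φ ∗ (−h')](s) ≤ 9e · C(D) · (ν/ν̄) · (s⋆/σ²) · exp(−(s−s⋆)²/(2ν̄²)). -/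

import Mathlib

/-!
Put `m = D - 3`, `p = m ^ (1 / 6)` and `a = s⋆`. With `y = (a² - u²) / (σ² m)`, on `(0, R)`
`-h'(u) = C(D) (u / σ²) exp ((m / 2) (log (1 + y) - y))`. Near `a` the quadratic term `-(m / 4) y²`
of the exponent is `-(u - a)² / (2ν²)` up to an error `O(a |u - a|³ / (σ⁴ m))`, and the cubic
remainder is `O(a³ |u - a|³ / (σ⁶ m²))`. Both are bounded on the window `|u - a| ≤ σp / 2`, since
`a = O(σp³)`, so there `-h'` is `K exp (-(u - a)² / (2ν²))` up to constant factors, where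
`K = C(D) a / σ²`. To the right of the window the Gaussian upper bound persists; to the left,
`|-h'| = O(K)`.

The product of `φ` with `exp (-(u - a)² / (2ν²))` is a single Gaussian of mass
`(ν / ν̄) exp (-(s - a)² / (2ν̄²))`. As `|s - a| ≤ σp / 6`, its center is at distance at least
`σp / 3` from the complement of the window, so the truncation costs only a fraction of that mass. On
the left tail and on the negative half-line, the decay of `φ` alone beats
`(ν / ν̄) exp (-(s - a)² / (2ν̄²)) ≥ exp (-p² / 72) / 3`.
-/

open MeasureTheory

/-- The negative derivative `-h'(s)` of
`h(s) = P[χ²_{D-1} ≤ (R² - s²)/σ²]`, valid for `0 < s < R`. -/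
noncomputable def negDH (D : ℕ) (σ R : ℝ) (s : ℝ) : ℝ :=
  (1 / Real.Gamma (((D : ℝ) - 1) / 2)) * (s / σ ^ 2) *
    ((R ^ 2 - s ^ 2) / (2 * σ ^ 2)) ^ (((D : ℝ) - 3) / 2) *
    Real.exp (-((R ^ 2 - s ^ 2) / (2 * σ ^ 2)))

/-- `-h'` extended to all of `ℝ`: it is set to `0` outside `(0, R)`, except that for
`s < 0` one uses `-h'(s) = -h'(-s) · sign s` (the derivative of the even extension
of `h`). -/
noncomputable def negDHext (D : ℕ) (σ R : ℝ) (s : ℝ) : ℝ :=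
  if s < 0 then -(if 0 < -s ∧ -s < R then negDH D σ R (-s) else 0)
  else (if 0 < s ∧ s < R then negDH D σ R s else 0)

/-- The centered Gaussian density with standard deviation `σ`. -/
noncomputable def gaussPdf (σ : ℝ) (v : ℝ) : ℝ :=
  (1 / (Real.sqrt (2 * Real.pi) * σ)) * Real.exp (-v ^ 2 / (2 * σ ^ 2))

/-- Convolution `[φ ∗ f](t) = ∫ φ(v) f(t - v) dv` with the Gaussian density. -/
noncomputable def gaussConv (σ : ℝ) (f : ℝ → ℝ) (t : ℝ) : ℝ :=
  ∫ v : ℝ, gaussPdf σ v * f (t - v)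

/-- `C(D) = ((D-3)/2)^((D-3)/2) e^(-(D-3)/2) / Γ((D-1)/2)`. -/
noncomputable def CofD (D : ℕ) : ℝ :=
  (((D : ℝ) - 3) / 2) ^ (((D : ℝ) - 3) / 2) * Real.exp (-(((D : ℝ) - 3) / 2)) /
    Real.Gamma (((D : ℝ) - 1) / 2)

/-! ### The Gamma weight near its maximum -/

lemma log_one_add_le_sub_sq_half_of_nonpos {y : ℝ} (hy : -1 < y) (hy0 : y ≤ 0) :
    Real.log (1 + y) ≤ y - y ^ 2 / 2 := by
  have hsum := Real.hasSum_pow_div_log_of_abs_lt_one (x := -y)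
    (abs_lt.2 ⟨by linarith, by linarith⟩)
  have hle := sum_le_hasSum (Finset.range 2)
    (fun i _ => by have : 0 ≤ -y := by linarith
                   positivity) hsum
  norm_num [Finset.sum_range_succ] at hle
  linarith

lemma abs_log_one_add_sub_le {y : ℝ} (hy : |y| ≤ 1 / 9) :
    |Real.log (1 + y) - (y - y ^ 2 / 2)| ≤ |y| ^ 3 / 2 := by
  have htaylor := Real.abs_log_sub_add_sum_range_le (x := -y) (by rw [abs_neg]; linarith) 3
  have hrem : |-y| ^ (3 + 1) / (1 - |-y|) ≤ |y| ^ 3 / 6 := by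
    rw [abs_neg, div_le_iff₀ (by linarith)]
    nlinarith [pow_nonneg (abs_nonneg y) 3]
  have hsplit : Real.log (1 + y) - (y - y ^ 2 / 2) =
      (∑ i ∈ Finset.range 3, (-y) ^ (i + 1) / (i + 1) + Real.log (1 - -y)) + y ^ 3 / 3 := by
    norm_num [Finset.sum_range_succ]
    ring
  have hcube : |y ^ 3 / 3| = |y| ^ 3 / 3 := by simp [abs_div]
  calc |Real.log (1 + y) - (y - y ^ 2 / 2)|
      ≤ |y| ^ 3 / 6 + |y| ^ 3 / 3 := by
        rw [hsplit, ← hcube]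
        exact (abs_add_le _ _).trans (by gcongr; exact htaylor.trans hrem)
    _ = |y| ^ 3 / 2 := by ring

/-- The logarithm of the ratio of the Gamma weight `t ^ (m / 2) * exp (-t)` at
`t = (m / 2) * (1 + y)` to its maximum, which is attained at `t = m / 2`. -/
noncomputable def gammaLogRatio (m y : ℝ) : ℝ :=
  m / 2 * (Real.log (1 + y) - y)

lemma gammaLogRatio_nonpos {m y : ℝ} (hm : 0 ≤ m) (hy : -1 < y) : gammaLogRatio m y ≤ 0 := by
  have := Real.log_le_sub_one_of_pos (show 0 < 1 + y by linarith)
  exact mul_nonpos_of_nonneg_of_nonpos (by positivity) (by linarith)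

lemma gammaLogRatio_le_neg_sq_of_nonpos {m y : ℝ} (hm : 0 ≤ m) (hy : -1 < y) (hy0 : y ≤ 0) :
    gammaLogRatio m y ≤ -(m / 4 * y ^ 2) := by
  calc m / 2 * (Real.log (1 + y) - y)
      ≤ m / 2 * (y - y ^ 2 / 2 - y) := by
        gcongr
        exact log_one_add_le_sub_sq_half_of_nonpos hy hy0
    _ = -(m / 4 * y ^ 2) := by ring

lemma abs_gammaLogRatio_add_sq_le {m y : ℝ} (hm : 0 ≤ m) (hy : |y| ≤ 1 / 9) :
    |gammaLogRatio m y + m / 4 * y ^ 2| ≤ m / 4 * |y| ^ 3 := by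
  have hfactor : gammaLogRatio m y + m / 4 * y ^ 2 =
      m / 2 * (Real.log (1 + y) - (y - y ^ 2 / 2)) := by
    rw [gammaLogRatio]
    ring
  calc |gammaLogRatio m y + m / 4 * y ^ 2|
      = m / 2 * |Real.log (1 + y) - (y - y ^ 2 / 2)| := by
        rw [hfactor, abs_mul, abs_of_nonneg (by positivity)]
    _ ≤ m / 2 * (|y| ^ 3 / 2) := by
        gcongr
        exact abs_log_one_add_sub_le hy
    _ = m / 4 * |y| ^ 3 := by ring

lemma quarter_mul_sq_div_eq {m : ℝ} (hm : m ≠ 0) (a u : ℝ) :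
    m / 4 * ((a ^ 2 - u ^ 2) / m) ^ 2 =
      a ^ 2 * (u - a) ^ 2 / m + a * (u - a) ^ 3 / m + (u - a) ^ 4 / (4 * m) := by
  field_simp
  ring

lemma one_add_le_two_mul_exp_cube {x : ℝ} (hx : 0 ≤ x) : 1 + x ≤ 2 * Real.exp (x ^ 3) := by
  have hexp := Real.add_one_le_exp (x ^ 3)
  nlinarith [mul_nonneg hx (sq_nonneg (x - 1)), sq_nonneg (x - 1)]

-- The cubic term of the exponent pays for the growth of the prefactor `u`.
lemma mul_exp_gammaLogRatio_le_of_le {m a u : ℝ} (hm : 0 < m) (ha : 0 < a) (hma : m ≤ a ^ 4)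
    (hau : a ≤ u) (hu : u ^ 2 < a ^ 2 + m) :
    u * Real.exp (gammaLogRatio m ((a ^ 2 - u ^ 2) / m)) ≤
      2 * a * Real.exp (-(a ^ 2 * (u - a) ^ 2 / m)) := by
  set w := u - a with hw
  have : 0 ≤ w := by linarith
  have hexponent : gammaLogRatio m ((a ^ 2 - u ^ 2) / m) ≤
      -(a ^ 2 * w ^ 2 / m) - a * w ^ 3 / m := by
    have hquad := gammaLogRatio_le_neg_sq_of_nonpos hm.le
      (show -1 < (a ^ 2 - u ^ 2) / m by rw [lt_div_iff₀ hm]; linarith)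
      (div_nonpos_of_nonpos_of_nonneg (by nlinarith) hm.le)
    rw [quarter_mul_sq_div_eq hm.ne'] at hquad
    have : 0 ≤ w ^ 4 / (4 * m) := by positivity
    linarith
  have hprefactor : u ≤ 2 * a * Real.exp (a * w ^ 3 / m) := by
    have hcube : (w / a) ^ 3 ≤ a * w ^ 3 / m := by
      rw [div_pow, div_le_div_iff₀ (by positivity) hm]
      calc w ^ 3 * m ≤ w ^ 3 * a ^ 4 := by gcongr
        _ = a * w ^ 3 * a ^ 3 := by ring
    calc u = a * (1 + w / a) := by rw [hw]; field_simp; ring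
      _ ≤ a * (2 * Real.exp ((w / a) ^ 3)) := by
        gcongr
        exact one_add_le_two_mul_exp_cube (by positivity)
      _ ≤ a * (2 * Real.exp (a * w ^ 3 / m)) := by gcongr
      _ = 2 * a * Real.exp (a * w ^ 3 / m) := by ring
  calc u * Real.exp (gammaLogRatio m ((a ^ 2 - u ^ 2) / m))
      ≤ 2 * a * Real.exp (a * w ^ 3 / m) *
          Real.exp (-(a ^ 2 * w ^ 2 / m) - a * w ^ 3 / m) := by gcongr
    _ = 2 * a * Real.exp (-(a ^ 2 * w ^ 2 / m)) := by
        rw [mul_assoc, ← Real.exp_add]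
        ring_nf

lemma abs_sq_sub_sq_div_le {p a u : ℝ} (hp : 80 ≤ p ^ 2) (hp0 : 0 < p) (ha : 0 ≤ a)
    (hap : a ≤ 7 / 4 * p ^ 3) (hu : |u - a| ≤ p / 2) :
    |(a ^ 2 - u ^ 2) / p ^ 6| ≤ 16 / 9 / p ^ 2 := by
  have hsum : |a + u| ≤ 2 * a + p / 2 := by
    calc |a + u| = |2 * a + (u - a)| := by ring_nf
      _ ≤ |2 * a| + |u - a| := abs_add_le _ _
      _ ≤ 2 * a + p / 2 := by rw [abs_of_nonneg (by positivity)]; gcongr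
  have hnum : |a ^ 2 - u ^ 2| ≤ 16 / 9 * p ^ 4 := by
    calc |a ^ 2 - u ^ 2| = |a + u| * |u - a| := by
          rw [← abs_mul, abs_sub_comm]
          ring_nf
      _ ≤ (2 * (7 / 4 * p ^ 3) + p / 2) * (p / 2) := by gcongr; linarith
      _ ≤ 16 / 9 * p ^ 4 := by nlinarith [sq_nonneg p]
  rw [abs_div, abs_of_pos (show 0 < p ^ 6 by positivity), div_le_div_iff₀ (by positivity)
    (by positivity)]
  calc |a ^ 2 - u ^ 2| * p ^ 2 ≤ 16 / 9 * p ^ 4 * p ^ 2 := by gcongr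
    _ = 16 / 9 * p ^ 6 := by ring

lemma abs_gammaLogRatio_add_le_two {p a u : ℝ} (hp : 80 ≤ p ^ 2) (hp0 : 0 < p) (ha : 0 ≤ a)
    (hap : a ≤ 7 / 4 * p ^ 3) (hu : |u - a| ≤ p / 2) :
    |gammaLogRatio (p ^ 6) ((a ^ 2 - u ^ 2) / p ^ 6) + a ^ 2 * (u - a) ^ 2 / p ^ 6| ≤ 2 := by
  have hy := abs_sq_sub_sq_div_le hp hp0 ha hap hu
  have hy9 : |(a ^ 2 - u ^ 2) / p ^ 6| ≤ 1 / 9 := by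
    refine hy.trans ?_
    rw [div_le_iff₀ (by positivity)]
    linarith
  have htaylor := abs_gammaLogRatio_add_sq_le (show 0 ≤ p ^ 6 by positivity) hy9
  rw [quarter_mul_sq_div_eq (by positivity)] at htaylor
  have hremainder : p ^ 6 / 4 * |(a ^ 2 - u ^ 2) / p ^ 6| ^ 3 ≤ 3 / 2 := by
    calc p ^ 6 / 4 * |(a ^ 2 - u ^ 2) / p ^ 6| ^ 3 ≤ p ^ 6 / 4 * (16 / 9 / p ^ 2) ^ 3 := by gcongr
      _ = (16 / 9) ^ 3 / 4 := by field_simp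
      _ ≤ 3 / 2 := by norm_num
  have hcubic : |a * (u - a) ^ 3 / p ^ 6| ≤ 7 / 32 := by
    rw [abs_div, abs_mul, abs_pow, abs_of_nonneg ha, abs_of_pos (show 0 < p ^ 6 by positivity),
      div_le_iff₀ (by positivity)]
    calc a * |u - a| ^ 3 ≤ 7 / 4 * p ^ 3 * (p / 2) ^ 3 := by gcongr
      _ = 7 / 32 * p ^ 6 := by ring
  have hquartic : |(u - a) ^ 4 / (4 * p ^ 6)| ≤ 1 / 4 := by
    rw [abs_div, abs_pow, abs_of_pos (show 0 < 4 * p ^ 6 by positivity),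
      div_le_iff₀ (by positivity)]
    calc |u - a| ^ 4 ≤ (p / 2) ^ 4 := by gcongr
      _ ≤ 1 / 4 * (4 * p ^ 6) := by nlinarith [show 0 < p ^ 4 by positivity]
  grind [abs_le]

lemma mul_exp_gammaLogRatio_le {p a u : ℝ} (hp : 80 ≤ p ^ 2) (hp0 : 0 < p) (ha : 0 < a)
    (hpa : p ^ 6 ≤ a ^ 4) (hap : a ≤ 7 / 4 * p ^ 3) (hu : u ^ 2 < a ^ 2 + p ^ 6) :
    u * Real.exp (gammaLogRatio (p ^ 6) ((a ^ 2 - u ^ 2) / p ^ 6)) ≤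
      a * (Real.exp 2 * Real.exp (-(a ^ 2 * (u - a) ^ 2 / p ^ 6)) +
        (Set.Iio (a - p / 2)).indicator 1 u) := by
  have hp6 : 0 < p ^ 6 := by positivity
  rcases lt_or_ge u (a - p / 2) with hfar | hnear
  · have hexp : Real.exp (gammaLogRatio (p ^ 6) ((a ^ 2 - u ^ 2) / p ^ 6)) ≤ 1 :=
      Real.exp_le_one_iff.2 <| gammaLogRatio_nonpos hp6.le <| by
        rw [lt_div_iff₀ hp6]
        linarith
    rw [Set.indicator_of_mem (Set.mem_Iio.2 hfar), Pi.one_apply]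
    gcongr
    · linarith
    · exact hexp.trans (le_add_of_nonneg_left (by positivity))
  rw [Set.indicator_of_notMem (by simpa using hnear), add_zero]
  rcases le_or_gt a u with hright | hleft
  · have htwo : 2 ≤ Real.exp 2 := by linarith [Real.add_one_le_exp (2 : ℝ)]
    calc _ ≤ 2 * a * Real.exp (-(a ^ 2 * (u - a) ^ 2 / p ^ 6)) :=
          mul_exp_gammaLogRatio_le_of_le hp6 ha hpa hright hu
      _ = a * (2 * Real.exp (-(a ^ 2 * (u - a) ^ 2 / p ^ 6))) := by ring
      _ ≤ _ := by gcongr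
  · have hwindow := abs_le.1 <| abs_gammaLogRatio_add_le_two hp hp0 ha.le hap
      (abs_le.2 ⟨by linarith, by linarith⟩ : |u - a| ≤ p / 2)
    rw [← Real.exp_add]
    gcongr
    linarith

lemma le_mul_exp_gammaLogRatio {p a u : ℝ} (hp : 80 ≤ p ^ 2) (hp0 : 0 < p) (hpa : p ≤ a)
    (hap : a ≤ 7 / 4 * p ^ 3) (hu : |u - a| ≤ p / 2) :
    a * (Real.exp (-2) / 2 * Real.exp (-(a ^ 2 * (u - a) ^ 2 / p ^ 6))) ≤
      u * Real.exp (gammaLogRatio (p ^ 6) ((a ^ 2 - u ^ 2) / p ^ 6)) := by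
  have hwindow := abs_le.1 (abs_gammaLogRatio_add_le_two hp hp0 (by linarith) hap hu)
  have hhalf : a / 2 ≤ u := by linarith [(abs_le.1 hu).1]
  calc a * (Real.exp (-2) / 2 * Real.exp (-(a ^ 2 * (u - a) ^ 2 / p ^ 6)))
      = a / 2 * Real.exp (-2 + -(a ^ 2 * (u - a) ^ 2 / p ^ 6)) := by
        rw [Real.exp_add]
        ring
    _ ≤ _ := by
        gcongr
        · linarith
        · linarith

/-! ### Gaussian convolutions -/

lemma gaussPdf_nonneg {σ : ℝ} (hσ : 0 ≤ σ) (v : ℝ) : 0 ≤ gaussPdf σ v := by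
  unfold gaussPdf
  positivity

lemma gaussPdf_sub_eq_gaussianPDFReal {σ : ℝ} (hσ : 0 ≤ σ) (c v : ℝ) :
    gaussPdf σ (v - c) = ProbabilityTheory.gaussianPDFReal c (σ ^ 2).toNNReal v := by
  rw [gaussPdf, ProbabilityTheory.gaussianPDFReal, Real.coe_toNNReal _ (sq_nonneg σ),
    Real.sqrt_mul (show 0 ≤ 2 * Real.pi by positivity) (σ ^ 2), Real.sqrt_sq hσ, one_div]

lemma integrable_gaussPdf_sub {σ : ℝ} (hσ : 0 ≤ σ) (c : ℝ) :
    Integrable fun v => gaussPdf σ (v - c) := by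
  simp_rw [gaussPdf_sub_eq_gaussianPDFReal hσ]
  exact ProbabilityTheory.integrable_gaussianPDFReal c _

lemma integrable_gaussPdf {σ : ℝ} (hσ : 0 ≤ σ) : Integrable (gaussPdf σ) := by
  simpa using integrable_gaussPdf_sub hσ 0

lemma integral_gaussPdf_sub {σ : ℝ} (hσ : 0 < σ) (c : ℝ) : ∫ v, gaussPdf σ (v - c) = 1 := by
  simp_rw [gaussPdf_sub_eq_gaussianPDFReal hσ.le]
  exact ProbabilityTheory.integral_gaussianPDFReal_eq_one c (by positivity)

-- Half of the exponent gives the small factor and the other half remains integrable.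
lemma gaussPdf_le_of_le_abs {σ q v : ℝ} (hσ : 0 < σ) (hq : 0 ≤ q) (hv : q ≤ |v|) :
    gaussPdf σ v ≤ √2 * Real.exp (-(q ^ 2 / (4 * σ ^ 2))) * gaussPdf (√2 * σ) v := by
  have hsq : q ^ 2 ≤ v ^ 2 := by
    rw [← sq_abs v]
    gcongr
  calc gaussPdf σ v
      = 1 / (√(2 * Real.pi) * σ) *
          (Real.exp (-(v ^ 2 / (4 * σ ^ 2))) * Real.exp (-(v ^ 2 / (4 * σ ^ 2)))) := by
        rw [gaussPdf, ← Real.exp_add]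
        congr 2
        field_simp
        ring
    _ ≤ 1 / (√(2 * Real.pi) * σ) *
          (Real.exp (-(q ^ 2 / (4 * σ ^ 2))) * Real.exp (-(v ^ 2 / (4 * σ ^ 2)))) := by gcongr
    _ = √2 * Real.exp (-(q ^ 2 / (4 * σ ^ 2))) * gaussPdf (√2 * σ) v := by
        rw [gaussPdf, mul_pow, Real.sq_sqrt zero_le_two]
        field_simp
        ring_nf

lemma setIntegral_gaussPdf_sub_le {σ q c : ℝ} {S : Set ℝ} (hσ : 0 < σ) (hq : 0 ≤ q)
    (hS : MeasurableSet S) (hSq : ∀ v ∈ S, q ≤ |v - c|) :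
    ∫ v in S, gaussPdf σ (v - c) ≤ √2 * Real.exp (-(q ^ 2 / (4 * σ ^ 2))) := by
  have hwide := integrable_gaussPdf_sub (show 0 ≤ √2 * σ by positivity) c
  calc ∫ v in S, gaussPdf σ (v - c)
      ≤ ∫ v in S, √2 * Real.exp (-(q ^ 2 / (4 * σ ^ 2))) * gaussPdf (√2 * σ) (v - c) :=
        setIntegral_mono_on (integrable_gaussPdf_sub hσ.le c).integrableOn
          (hwide.const_mul _).integrableOn hS fun v hv => gaussPdf_le_of_le_abs hσ hq (hSq v hv)
    _ ≤ ∫ v, √2 * Real.exp (-(q ^ 2 / (4 * σ ^ 2))) * gaussPdf (√2 * σ) (v - c) :=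
        setIntegral_le_integral (hwide.const_mul _) (.of_forall fun v =>
          mul_nonneg (by positivity) (gaussPdf_nonneg (by positivity) _))
    _ = √2 * Real.exp (-(q ^ 2 / (4 * σ ^ 2))) := by
        rw [integral_const_mul, integral_gaussPdf_sub (by positivity), mul_one]

lemma integrable_gaussPdf_mul {σ C : ℝ} {f : ℝ → ℝ} (hσ : 0 ≤ σ) (hf : Measurable f)
    (hfC : ∀ u, |f u| ≤ C) (s : ℝ) : Integrable fun v => gaussPdf σ v * f (s - v) :=
  (integrable_gaussPdf hσ).mul_bdd (hf.comp (by fun_prop)).aestronglyMeasurable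
    (.of_forall fun v => hfC (s - v))

lemma gaussPdf_mul_indicator (σ : ℝ) (S : Set ℝ) (f : ℝ → ℝ) (s : ℝ) :
    (fun v => gaussPdf σ v * S.indicator f (s - v)) =
      ((s - ·) ⁻¹' S).indicator fun v => gaussPdf σ v * f (s - v) := by
  ext v
  by_cases hv : s - v ∈ S <;> simp [hv]

lemma integrable_gaussPdf_mul_indicator {σ s : ℝ} {S : Set ℝ} {f : ℝ → ℝ}
    (hS : MeasurableSet S) (hf : Integrable fun v => gaussPdf σ v * f (s - v)) :
    Integrable fun v => gaussPdf σ v * S.indicator f (s - v) := by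
  rw [gaussPdf_mul_indicator]
  exact hf.indicator (hS.preimage (by fun_prop))

lemma gaussConv_indicator (σ : ℝ) {S : Set ℝ} (hS : MeasurableSet S) (f : ℝ → ℝ) (s : ℝ) :
    gaussConv σ (S.indicator f) s = ∫ v in (s - ·) ⁻¹' S, gaussPdf σ v * f (s - v) := by
  rw [gaussConv, gaussPdf_mul_indicator, integral_indicator (hS.preimage (by fun_prop))]

lemma gaussConv_indicator_one_le {σ q s : ℝ} {S : Set ℝ} (hσ : 0 < σ) (hq : 0 ≤ q)
    (hS : MeasurableSet S) (hSq : ∀ u ∈ S, q ≤ |s - u|) :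
    gaussConv σ (S.indicator 1) s ≤ √2 * Real.exp (-(q ^ 2 / (4 * σ ^ 2))) := by
  rw [gaussConv_indicator σ hS]
  simpa using setIntegral_gaussPdf_sub_le (c := 0) hσ hq (hS.preimage (by fun_prop))
    fun v hv => by simpa using hSq _ hv

/-- The unnormalised Gaussian with center `a` and width `ν`. -/
noncomputable def gaussBump (a ν u : ℝ) : ℝ :=
  Real.exp (-(u - a) ^ 2 / (2 * ν ^ 2))

lemma gaussBump_pos (a ν u : ℝ) : 0 < gaussBump a ν u :=
  Real.exp_pos _

lemma gaussBump_le_one (a ν u : ℝ) : gaussBump a ν u ≤ 1 :=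
  Real.exp_le_one_iff.2
    (div_nonpos_of_nonpos_of_nonneg (neg_nonpos.2 (sq_nonneg _)) (by positivity))

lemma measurable_gaussBump (a ν : ℝ) : Measurable (gaussBump a ν) := by
  unfold gaussBump
  fun_prop

lemma gaussPdf_mul_gaussBump {σ ν : ℝ} (hσ : 0 < σ) (hν : 0 < ν) (a s v : ℝ) :
    gaussPdf σ v * gaussBump a ν (s - v) =
      ν / √(ν ^ 2 + σ ^ 2) * gaussBump a √(ν ^ 2 + σ ^ 2) s *
        gaussPdf (σ * ν / √(ν ^ 2 + σ ^ 2)) (v - σ ^ 2 * (s - a) / (ν ^ 2 + σ ^ 2)) := by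
  have hpos : 0 < ν ^ 2 + σ ^ 2 := by positivity
  have hsqrt : √(ν ^ 2 + σ ^ 2) ^ 2 = ν ^ 2 + σ ^ 2 := Real.sq_sqrt hpos.le
  have hexponent : -v ^ 2 / (2 * σ ^ 2) + -(s - v - a) ^ 2 / (2 * ν ^ 2) =
      -(s - a) ^ 2 / (2 * (ν ^ 2 + σ ^ 2)) +
        -(v - σ ^ 2 * (s - a) / (ν ^ 2 + σ ^ 2)) ^ 2 /
          (2 * ((σ * ν) ^ 2 / (ν ^ 2 + σ ^ 2))) := by
    field_simp
    ring
  calc gaussPdf σ v * gaussBump a ν (s - v)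
      = 1 / (√(2 * Real.pi) * σ) *
          Real.exp (-v ^ 2 / (2 * σ ^ 2) + -(s - v - a) ^ 2 / (2 * ν ^ 2)) := by
        rw [Real.exp_add, gaussPdf, gaussBump]
        ring
    _ = _ := by
        rw [hexponent, Real.exp_add, gaussPdf, gaussBump, div_pow, hsqrt]
        field_simp

lemma gaussConv_gaussBump {σ ν : ℝ} (hσ : 0 < σ) (hν : 0 < ν) (a s : ℝ) :
    gaussConv σ (gaussBump a ν) s =
      ν / √(ν ^ 2 + σ ^ 2) * gaussBump a √(ν ^ 2 + σ ^ 2) s := by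
  simp_rw [gaussConv, gaussPdf_mul_gaussBump hσ hν]
  rw [integral_const_mul, integral_gaussPdf_sub (by positivity), mul_one]

lemma gaussConv_gaussBump_pos {σ ν : ℝ} (hσ : 0 < σ) (hν : 0 < ν) (a s : ℝ) :
    0 < gaussConv σ (gaussBump a ν) s := by
  rw [gaussConv_gaussBump hσ hν]
  exact mul_pos (by positivity) (gaussBump_pos _ _ _)

lemma mul_gaussBump_le_gaussConv_gaussBump {σ ν : ℝ} (hσ : 0 < σ) (hν : 0 < ν) (a s : ℝ) :
    ν / √(ν ^ 2 + σ ^ 2) * gaussBump a σ s ≤ gaussConv σ (gaussBump a ν) s := by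
  rw [gaussConv_gaussBump hσ hν, gaussBump, gaussBump, neg_div, neg_div,
    Real.sq_sqrt (by positivity)]
  gcongr
  nlinarith [sq_nonneg ν]

lemma gaussConv_indicator_gaussBump_le {σ ν a δ s : ℝ} {S : Set ℝ} (hσ : 0 < σ) (hν : 0 < ν)
    (hS : MeasurableSet S) (hSδ : ∀ u ∈ S, δ ≤ |u - a|) (hs : |s - a| ≤ δ) :
    gaussConv σ (S.indicator (gaussBump a ν)) s ≤
      gaussConv σ (gaussBump a ν) s * (√2 * Real.exp (-((δ - |s - a|) ^ 2 / (4 * σ ^ 2)))) := by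
  set τ := σ * ν / √(ν ^ 2 + σ ^ 2) with hτ
  set c := σ ^ 2 * (s - a) / (ν ^ 2 + σ ^ 2) with hc
  have hτ0 : 0 < τ := by positivity
  have hτσ : τ ≤ σ := by
    rw [hτ, mul_div_assoc]
    exact mul_le_of_le_one_right hσ.le
      (div_le_one_of_le₀ (Real.le_sqrt_of_sq_le (by nlinarith)) (by positivity))
  have hcenter : |s - a - c| ≤ |s - a| := by
    have : s - a - c = ν ^ 2 / (ν ^ 2 + σ ^ 2) * (s - a) := by
      rw [hc]
      field_simp
      ring
    rw [this, abs_mul, abs_of_pos (by positivity)]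
    exact mul_le_of_le_one_left (abs_nonneg _)
      (div_le_one_of_le₀ (by nlinarith) (by positivity))
  have hfar : ∀ v ∈ (s - ·) ⁻¹' S, δ - |s - a| ≤ |v - c| := by
    intro v hv
    have htri := abs_sub (s - a - c) (v - c)
    rw [show s - a - c - (v - c) = s - v - a by ring] at htri
    linarith [hSδ _ hv]
  calc gaussConv σ (S.indicator (gaussBump a ν)) s
      = gaussConv σ (gaussBump a ν) s * ∫ v in (s - ·) ⁻¹' S, gaussPdf τ (v - c) := by
        simp_rw [gaussConv_indicator σ hS, gaussPdf_mul_gaussBump hσ hν]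
        rw [integral_const_mul, gaussConv_gaussBump hσ hν]
    _ ≤ gaussConv σ (gaussBump a ν) s *
          (√2 * Real.exp (-((δ - |s - a|) ^ 2 / (4 * τ ^ 2)))) := by
        gcongr
        · exact (gaussConv_gaussBump_pos hσ hν a s).le
        · exact setIntegral_gaussPdf_sub_le hτ0 (by linarith) (hS.preimage (by fun_prop)) hfar
    _ ≤ _ := by
        gcongr
        exact (gaussConv_gaussBump_pos hσ hν a s).le

lemma integrable_gaussPdf_mul_gaussBump {σ : ℝ} (hσ : 0 ≤ σ) (a ν s : ℝ) :
    Integrable fun v => gaussPdf σ v * gaussBump a ν (s - v) :=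
  integrable_gaussPdf_mul hσ (measurable_gaussBump a ν)
    (fun u => (abs_of_pos (gaussBump_pos a ν u)).trans_le (gaussBump_le_one a ν u)) s

lemma gaussConv_le_of_le_gaussBump_add_indicator {σ ν a A B q s : ℝ} {S : Set ℝ} {f : ℝ → ℝ}
    (hσ : 0 < σ) (hB : 0 ≤ B) (hq : 0 ≤ q) (hS : MeasurableSet S)
    (hSq : ∀ u ∈ S, q ≤ |s - u|) (hf : Integrable fun v => gaussPdf σ v * f (s - v))
    (hfle : ∀ u, f u ≤ A * gaussBump a ν u + B * S.indicator 1 u) :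
    gaussConv σ f s ≤
      A * gaussConv σ (gaussBump a ν) s + B * (√2 * Real.exp (-(q ^ 2 / (4 * σ ^ 2)))) := by
  have hbump := integrable_gaussPdf_mul_gaussBump hσ.le a ν s
  have hind : Integrable fun v => gaussPdf σ v * S.indicator 1 (s - v) :=
    integrable_gaussPdf_mul_indicator hS (by simpa using integrable_gaussPdf hσ.le)
  calc gaussConv σ f s
      ≤ ∫ v, (A * (gaussPdf σ v * gaussBump a ν (s - v)) +
          B * (gaussPdf σ v * S.indicator 1 (s - v))) := by
        refine integral_mono hf ((hbump.const_mul A).add (hind.const_mul B)) fun v => ?_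
        have := mul_le_mul_of_nonneg_left (hfle (s - v)) (gaussPdf_nonneg hσ.le v)
        linarith
    _ = A * gaussConv σ (gaussBump a ν) s + B * gaussConv σ (S.indicator 1) s := by
        rw [integral_add (hbump.const_mul A) (hind.const_mul B), integral_const_mul,
          integral_const_mul]
        rfl
    _ ≤ _ := by
        gcongr
        exact gaussConv_indicator_one_le hσ hq hS hSq

lemma le_gaussConv_indicator_gaussBump {σ ν a δ s : ℝ} (hσ : 0 < σ) (hν : 0 < ν)
    (hs : |s - a| ≤ δ) :
    gaussConv σ (gaussBump a ν) s *
        (1 - √2 * Real.exp (-((δ - |s - a|) ^ 2 / (4 * σ ^ 2)))) ≤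
      gaussConv σ ((Metric.closedBall a δ).indicator (gaussBump a ν)) s := by
  have hball : MeasurableSet (Metric.closedBall a δ) := Metric.isClosed_closedBall.measurableSet
  have hsplit : gaussConv σ ((Metric.closedBall a δ).indicator (gaussBump a ν)) s +
      gaussConv σ ((Metric.closedBall a δ)ᶜ.indicator (gaussBump a ν)) s =
        gaussConv σ (gaussBump a ν) s := by
    rw [gaussConv_indicator σ hball, gaussConv_indicator σ hball.compl, Set.preimage_compl]
    exact integral_add_compl (hball.preimage (by fun_prop))
      (integrable_gaussPdf_mul_gaussBump hσ.le a ν s)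
  have houtside := gaussConv_indicator_gaussBump_le hσ hν hball.compl
    (fun u hu => (not_le.1 fun h => hu (Metric.mem_closedBall.2 h)).le) hs
  linarith

lemma le_gaussConv_of_indicator_gaussBump_sub_indicator_le {σ ν a δ A B q s : ℝ} {S : Set ℝ}
    {f : ℝ → ℝ} (hσ : 0 < σ) (hν : 0 < ν) (hA : 0 ≤ A) (hB : 0 ≤ B) (hq : 0 ≤ q)
    (hs : |s - a| ≤ δ) (hS : MeasurableSet S) (hSq : ∀ u ∈ S, q ≤ |s - u|)
    (hf : Integrable fun v => gaussPdf σ v * f (s - v))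
    (hlef : ∀ u, A * (Metric.closedBall a δ).indicator (gaussBump a ν) u -
      B * S.indicator 1 u ≤ f u) :
    A * (gaussConv σ (gaussBump a ν) s *
        (1 - √2 * Real.exp (-((δ - |s - a|) ^ 2 / (4 * σ ^ 2))))) -
      B * (√2 * Real.exp (-(q ^ 2 / (4 * σ ^ 2)))) ≤ gaussConv σ f s := by
  have hbump := integrable_gaussPdf_mul_indicator
    (Metric.isClosed_closedBall (x := a) (ε := δ)).measurableSet
    (integrable_gaussPdf_mul_gaussBump hσ.le a ν s)
  have hind : Integrable fun v => gaussPdf σ v * S.indicator 1 (s - v) :=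
    integrable_gaussPdf_mul_indicator hS (by simpa using integrable_gaussPdf hσ.le)
  calc _ ≤ A * gaussConv σ ((Metric.closedBall a δ).indicator (gaussBump a ν)) s -
          B * gaussConv σ (S.indicator 1) s := by
        gcongr
        · exact le_gaussConv_indicator_gaussBump hσ hν hs
        · exact gaussConv_indicator_one_le hσ hq hS hSq
    _ = ∫ v, (A * (gaussPdf σ v * (Metric.closedBall a δ).indicator (gaussBump a ν) (s - v)) -
          B * (gaussPdf σ v * S.indicator 1 (s - v))) := by
        rw [integral_sub (hbump.const_mul A) (hind.const_mul B), integral_const_mul,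
          integral_const_mul]
        rfl
    _ ≤ gaussConv σ f s := by
        refine integral_mono ((hbump.const_mul A).sub (hind.const_mul B)) hf fun v => ?_
        have := mul_le_mul_of_nonneg_left (hlef (s - v)) (gaussPdf_nonneg hσ.le v)
        linarith

/-! ### Numerical estimates -/

lemma sqrt_two_le_three_halves : √2 ≤ 3 / 2 :=
  Real.sqrt_le_iff.2 (by norm_num)

lemma exp_neg_sq_div_le_one_third {p : ℝ} (hp : 80 ≤ p ^ 2) : Real.exp (-(p ^ 2 / 36)) ≤ 1 / 3 := by
  rw [Real.exp_neg, inv_eq_one_div]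
  gcongr
  linarith [Real.add_one_le_exp (p ^ 2 / 36)]

lemma exp_neg_mul_pow_four_le {p : ℝ} (hp : 80 ≤ p ^ 2) :
    Real.exp (-(25 / 4 * p ^ 4)) ≤ Real.exp (-(p ^ 2 / 72)) / 20000 := by
  have hpow : 500 * p ^ 2 ≤ 25 / 4 * p ^ 4 := by nlinarith
  rw [le_div_iff₀ (by norm_num)]
  calc Real.exp (-(25 / 4 * p ^ 4)) * 20000
      ≤ Real.exp (-(25 / 4 * p ^ 4)) * Real.exp (499 * p ^ 2) := by
        gcongr
        linarith [Real.add_one_le_exp (499 * p ^ 2)]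
    _ ≤ Real.exp (-(p ^ 2 / 72)) := by
        rw [← Real.exp_add, Real.exp_le_exp]
        linarith

lemma one_div_sixteen_mul_exp_one_le :
    1 / (16 * Real.exp 1) ≤
      Real.exp (-2) / 2 * (1 - 1 / 2) - (Real.exp 2 + 1) * (9 / 40000) := by
  have hlo := Real.exp_one_gt_d9
  have hhi := Real.exp_one_lt_d9
  have hexp_two : Real.exp 2 ≤ 37 / 5 := by
    rw [show (2 : ℝ) = 1 + 1 by norm_num, Real.exp_add]
    nlinarith
  have hexp_neg_two : 5 / 37 ≤ Real.exp (-2) := by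
    rw [Real.exp_neg, le_inv_comm₀ (by norm_num) (Real.exp_pos 2)]
    linarith
  have hexp_one : 1 / (16 * Real.exp 1) ≤ 1 / 43 := by
    gcongr
    linarith
  linarith

lemma five_thirds_le_log_six : 5 / 3 ≤ Real.log 6 := by
  rw [Real.le_log_iff_exp_le (by norm_num)]
  refine le_of_pow_le_pow_left₀ three_ne_zero (by norm_num) ?_
  calc Real.exp (5 / 3) ^ 3 = Real.exp 1 ^ 5 := by
        rw [← Real.exp_nat_mul, ← Real.exp_nat_mul]
        norm_num
    _ ≤ 2.75 ^ 5 := by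
        gcongr
        linarith [Real.exp_one_lt_d9]
    _ ≤ 6 ^ 3 := by norm_num

/-! ### The Gaussian profile of `-h'` -/

lemma CofD_pos {D : ℕ} (hD : 3 < (D : ℝ)) : 0 < CofD D := by
  have hGamma : 0 < Real.Gamma (((D : ℝ) - 1) / 2) := Real.Gamma_pos_of_pos (by linarith)
  have : 0 < ((D : ℝ) - 3) / 2 := by linarith
  unfold CofD
  positivity

lemma negDH_eq_CofD_mul_exp {D : ℕ} {σ R a u : ℝ} (hD : 3 < (D : ℝ)) (hσ : 0 < σ)
    (hR : R ^ 2 = a ^ 2 + σ ^ 2 * ((D : ℝ) - 3)) (hu : u ^ 2 < R ^ 2) :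
    negDH D σ R u = CofD D / σ * (u / σ *
      Real.exp (gammaLogRatio ((D : ℝ) - 3) (((a / σ) ^ 2 - (u / σ) ^ 2) / ((D : ℝ) - 3)))) := by
  have hm : 0 < (D : ℝ) - 3 := by linarith
  rw [negDH, CofD]
  generalize (D : ℝ) - 3 = m at hR hm ⊢
  set y := ((a / σ) ^ 2 - (u / σ) ^ 2) / m with hy
  have hratio : (R ^ 2 - u ^ 2) / (2 * σ ^ 2) = m / 2 * (1 + y) := by
    rw [hy, hR]
    field_simp
    ring
  have hy1 : 0 < 1 + y := by
    have : 0 < m / 2 * (1 + y) := hratio ▸ div_pos (by linarith) (by positivity)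
    exact pos_of_mul_pos_right this (by positivity)
  have hsplit : Real.exp (-(m / 2 * (1 + y))) =
      Real.exp (-(m / 2)) * Real.exp (-(m / 2 * y)) := by
    rw [← Real.exp_add]
    ring_nf
  have hlog : Real.exp (gammaLogRatio m y) =
      Real.exp (Real.log (1 + y) * (m / 2)) * Real.exp (-(m / 2 * y)) := by
    rw [gammaLogRatio, ← Real.exp_add]
    ring_nf
  rw [hratio, Real.mul_rpow (by positivity) hy1.le, Real.rpow_def_of_pos hy1, hsplit, hlog]
  field_simp

lemma negDH_nonneg {D : ℕ} {σ R u : ℝ} (hD : 1 < (D : ℝ)) (hu : 0 ≤ u) (huR : u < R) :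
    0 ≤ negDH D σ R u := by
  have : 0 < Real.Gamma (((D : ℝ) - 1) / 2) := Real.Gamma_pos_of_pos (by linarith)
  have : 0 ≤ R ^ 2 - u ^ 2 := by nlinarith
  unfold negDH
  positivity

lemma negDHext_of_mem {D : ℕ} {σ R u : ℝ} (hu : u ∈ Set.Ioo 0 R) :
    negDHext D σ R u = negDH D σ R u := by
  rw [negDHext, if_neg hu.1.not_gt, if_pos (Set.mem_Ioo.1 hu)]

lemma negDHext_of_nonneg_of_notMem {D : ℕ} {σ R u : ℝ} (hu : 0 ≤ u) (huR : u ∉ Set.Ioo 0 R) :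
    negDHext D σ R u = 0 := by
  rw [negDHext, if_neg hu.not_gt]
  exact if_neg huR

lemma negDHext_neg (D : ℕ) (σ R u : ℝ) : negDHext D σ R (-u) = -negDHext D σ R u := by
  rcases lt_trichotomy u 0 with hu | rfl | hu
  · simp [negDHext, hu, hu.not_gt]
  · simp [negDHext]
  · simp [negDHext, hu, hu.not_gt]

lemma negDHext_nonneg {D : ℕ} {σ R u : ℝ} (hD : 1 < (D : ℝ)) (hu : 0 ≤ u) :
    0 ≤ negDHext D σ R u := by
  by_cases huR : u ∈ Set.Ioo 0 R
  · exact negDHext_of_mem huR ▸ negDH_nonneg hD hu huR.2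
  · exact (negDHext_of_nonneg_of_notMem hu huR).ge

lemma measurable_negDHext (D : ℕ) (σ R : ℝ) : Measurable (negDHext D σ R) := by
  have hnegDH : Measurable (negDH D σ R) := by
    unfold negDH
    fun_prop
  refine Measurable.ite measurableSet_Iio ?_ (Measurable.ite measurableSet_Ioo hnegDH
    measurable_const)
  exact (Measurable.ite (measurableSet_Ioo.preimage measurable_neg)
    (hnegDH.comp measurable_neg) measurable_const).neg

/-- The parameters of Laplace's method for `-h'`: the center `a = s⋆`, the width `ν` and the scale
`p = (D - 3) ^ (1 / 6)`, so that the Gaussian profile is accurate for `|u - a| ≤ σ * p / 2`. The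
inequalities are rounded consequences of the hypotheses on `D` and `s⋆`. -/
structure LaplaceRegime (D : ℕ) (σ R a ν p : ℝ) : Prop where
  σ_pos : 0 < σ
  R_pos : 0 < R
  a_pos : 0 < a
  ν_pos : 0 < ν
  p_pos : 0 < p
  dim_eq : (D : ℝ) - 3 = p ^ 6
  radius_sq : R ^ 2 = a ^ 2 + σ ^ 2 * p ^ 6
  width_sq : ν ^ 2 = σ ^ 4 * p ^ 6 / (2 * a ^ 2)
  le_scale_sq : 80 ≤ p ^ 2
  le_center : 6 * σ * p ^ 2 ≤ a
  center_le : a ≤ 7 / 4 * σ * p ^ 3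

namespace LaplaceRegime

variable {D : ℕ} {σ R a ν p u s : ℝ}

lemma three_lt_dim (h : LaplaceRegime D σ R a ν p) : 3 < (D : ℝ) := by
  have := h.dim_eq
  have : 0 < p ^ 6 := pow_pos h.p_pos 6
  linarith

lemma scale_le_center_div (h : LaplaceRegime D σ R a ν p) : p ≤ a / σ := by
  rw [le_div_iff₀ h.σ_pos]
  have hp : p ≤ p ^ 2 := by nlinarith [h.le_scale_sq, h.p_pos]
  nlinarith [h.le_center, mul_le_mul_of_nonneg_left hp h.σ_pos.le, mul_pos h.σ_pos h.p_pos]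

lemma center_div_le (h : LaplaceRegime D σ R a ν p) : a / σ ≤ 7 / 4 * p ^ 3 := by
  rw [div_le_iff₀ h.σ_pos]
  linarith [h.center_le]

lemma scale_pow_six_le (h : LaplaceRegime D σ R a ν p) : p ^ 6 ≤ (a / σ) ^ 4 := by
  have hp := h.p_pos
  have hcenter : 6 * p ^ 2 ≤ a / σ := by
    rw [le_div_iff₀ h.σ_pos]
    linarith [h.le_center]
  calc p ^ 6 ≤ (6 * p ^ 2) ^ 4 := by nlinarith [h.le_scale_sq, show 0 < p ^ 6 by positivity]
    _ ≤ (a / σ) ^ 4 := by gcongr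

lemma peak_pos (h : LaplaceRegime D σ R a ν p) : 0 < CofD D * (a / σ ^ 2) :=
  mul_pos (CofD_pos h.three_lt_dim) (div_pos h.a_pos (pow_pos h.σ_pos 2))

lemma peak_eq (h : LaplaceRegime D σ R a ν p) :
    CofD D * (a / σ ^ 2) = CofD D / σ * (a / σ) := by
  have := h.σ_pos
  field_simp

lemma gaussBump_eq (h : LaplaceRegime D σ R a ν p) (u : ℝ) :
    gaussBump a ν u = Real.exp (-((a / σ) ^ 2 * (u / σ - a / σ) ^ 2 / p ^ 6)) := by
  have := h.σ_pos
  have := h.a_pos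
  have := h.p_pos
  rw [gaussBump, h.width_sq]
  congr 1
  field_simp

lemma negDH_eq (h : LaplaceRegime D σ R a ν p) (hu : u ^ 2 < R ^ 2) :
    negDH D σ R u = CofD D / σ * (u / σ *
      Real.exp (gammaLogRatio (p ^ 6) (((a / σ) ^ 2 - (u / σ) ^ 2) / p ^ 6))) := by
  rw [negDH_eq_CofD_mul_exp h.three_lt_dim h.σ_pos (h.dim_eq ▸ h.radius_sq) hu, h.dim_eq]

lemma abs_div_sub_div_le_iff (h : LaplaceRegime D σ R a ν p) :
    |u / σ - a / σ| ≤ p / 2 ↔ |u - a| ≤ σ * p / 2 := by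
  rw [← sub_div, abs_div, abs_of_pos h.σ_pos, div_le_iff₀ h.σ_pos]
  ring_nf

lemma negDH_le (h : LaplaceRegime D σ R a ν p) (hu : u ^ 2 < R ^ 2) :
    negDH D σ R u ≤ CofD D * (a / σ ^ 2) *
      (Real.exp 2 * gaussBump a ν u + (Set.Iio (a - σ * p / 2)).indicator 1 u) := by
  have hσ := h.σ_pos
  have hC := CofD_pos h.three_lt_dim
  have huR : (u / σ) ^ 2 < (a / σ) ^ 2 + p ^ 6 := by
    rw [div_pow, div_pow, div_add' _ _ _ (by positivity),
      div_lt_div_iff_of_pos_right (by positivity)]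
    linarith [h.radius_sq]
  have hindicator : (Set.Iio (a / σ - p / 2)).indicator (1 : ℝ → ℝ) (u / σ) =
      (Set.Iio (a - σ * p / 2)).indicator 1 u := by
    have hiff : u / σ < a / σ - p / 2 ↔ u < a - σ * p / 2 := by
      rw [div_lt_iff₀ hσ]
      field_simp
    simp only [Set.indicator_apply, Set.mem_Iio, hiff, Pi.one_apply]
  rw [h.negDH_eq hu, h.peak_eq, mul_assoc, h.gaussBump_eq, ← hindicator]
  exact mul_le_mul_of_nonneg_left (mul_exp_gammaLogRatio_le h.le_scale_sq h.p_pos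
    (div_pos h.a_pos hσ) h.scale_pow_six_le h.center_div_le huR) (by positivity)

lemma le_negDH (h : LaplaceRegime D σ R a ν p) (hu : u ^ 2 < R ^ 2) (hua : |u - a| ≤ σ * p / 2) :
    CofD D * (a / σ ^ 2) * (Real.exp (-2) / 2 * gaussBump a ν u) ≤ negDH D σ R u := by
  have hσ := h.σ_pos
  have hC := CofD_pos h.three_lt_dim
  rw [h.negDH_eq hu, h.peak_eq, mul_assoc, h.gaussBump_eq]
  exact mul_le_mul_of_nonneg_left (le_mul_exp_gammaLogRatio h.le_scale_sq h.p_pos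
    h.scale_le_center_div h.center_div_le (h.abs_div_sub_div_le_iff.2 hua)) (by positivity)

lemma mem_Ioo_of_abs_sub_le (h : LaplaceRegime D σ R a ν p) (hua : |u - a| ≤ σ * p / 2) :
    u ∈ Set.Ioo 0 R := by
  have hσ := h.σ_pos
  have hp := h.p_pos
  have hpos : 0 < u := by
    have hpa := (le_div_iff₀ hσ).1 h.scale_le_center_div
    linarith [(abs_le.1 hua).1, mul_pos hσ hp]
  have hy := (abs_le.1 (abs_sq_sub_sq_div_le h.le_scale_sq hp (div_pos h.a_pos hσ).le
    h.center_div_le (h.abs_div_sub_div_le_iff.2 hua))).1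
  have hsmall : 16 / 9 / p ^ 2 < 1 := by
    rw [div_lt_one (by positivity)]
    linarith [h.le_scale_sq]
  have huR : u ^ 2 < R ^ 2 := by
    rw [h.radius_sq]
    have hlt : -1 < ((a / σ) ^ 2 - (u / σ) ^ 2) / p ^ 6 := by linarith
    rw [lt_div_iff₀ (by positivity), div_pow, div_pow, ← sub_div,
      lt_div_iff₀ (by positivity)] at hlt
    linarith
  exact ⟨hpos, lt_of_pow_lt_pow_left₀ 2 h.R_pos.le huR⟩

lemma abs_negDHext_le (h : LaplaceRegime D σ R a ν p) (u : ℝ) :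
    |negDHext D σ R u| ≤ CofD D * (a / σ ^ 2) * (Real.exp 2 + 1) := by
  have hK := h.peak_pos
  wlog hu : 0 ≤ u generalizing u
  · simpa [negDHext_neg] using this (-u) (by linarith)
  rw [abs_of_nonneg (negDHext_nonneg (by linarith [h.three_lt_dim]) hu)]
  by_cases huR : u ∈ Set.Ioo 0 R
  · rw [negDHext_of_mem huR]
    refine (h.negDH_le (pow_lt_pow_left₀ huR.2 hu two_ne_zero)).trans ?_
    gcongr
    · exact mul_le_of_le_one_right (Real.exp_pos 2).le (gaussBump_le_one a ν u)
    · exact Set.indicator_le_self' (fun _ _ => zero_le_one) u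
  · rw [negDHext_of_nonneg_of_notMem hu huR]
    positivity

lemma negDHext_le (h : LaplaceRegime D σ R a ν p) (u : ℝ) :
    negDHext D σ R u ≤ CofD D * (a / σ ^ 2) *
      (Real.exp 2 * gaussBump a ν u + (Set.Iio (a - σ * p / 2)).indicator 1 u) := by
  have hK := h.peak_pos
  by_cases huR : u ∈ Set.Ioo 0 R
  · rw [negDHext_of_mem huR]
    exact h.negDH_le (pow_lt_pow_left₀ huR.2 huR.1.le two_ne_zero)
  have hnonpos : negDHext D σ R u ≤ 0 := by
    rcases le_total 0 u with hu | hu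
    · exact (negDHext_of_nonneg_of_notMem hu huR).le
    · have := negDHext_nonneg (σ := σ) (R := R) (by linarith [h.three_lt_dim] : 1 < (D : ℝ))
        (neg_nonneg.2 hu)
      rw [negDHext_neg] at this
      linarith
  have := gaussBump_pos a ν u
  have hindicator : 0 ≤ (Set.Iio (a - σ * p / 2)).indicator (1 : ℝ → ℝ) u :=
    Set.indicator_nonneg (fun _ _ => zero_le_one) u
  exact hnonpos.trans (by positivity)

lemma le_negDHext (h : LaplaceRegime D σ R a ν p) (u : ℝ) :
    CofD D * (a / σ ^ 2) *
      (Real.exp (-2) / 2 * (Metric.closedBall a (σ * p / 2)).indicator (gaussBump a ν) u -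
        (Real.exp 2 + 1) * (Set.Iio 0).indicator 1 u) ≤ negDHext D σ R u := by
  by_cases hua : |u - a| ≤ σ * p / 2
  · have huR := h.mem_Ioo_of_abs_sub_le hua
    rw [Set.indicator_of_mem (show u ∈ Metric.closedBall a (σ * p / 2) from hua),
      Set.indicator_of_notMem (show u ∉ Set.Iio 0 from huR.1.not_gt), mul_zero, sub_zero,
      negDHext_of_mem huR]
    exact h.le_negDH (pow_lt_pow_left₀ huR.2 huR.1.le two_ne_zero) hua
  rw [Set.indicator_of_notMem (show u ∉ Metric.closedBall a (σ * p / 2) from hua), mul_zero,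
    zero_sub]
  rcases lt_or_ge u 0 with hu | hu
  · rw [Set.indicator_of_mem (show u ∈ Set.Iio 0 from hu), Pi.one_apply, mul_one, mul_neg]
    exact (abs_le.1 (h.abs_negDHext_le u)).1
  · rw [Set.indicator_of_notMem (show u ∉ Set.Iio 0 from hu.not_gt), mul_zero, neg_zero, mul_zero]
    exact negDHext_nonneg (by linarith [h.three_lt_dim]) hu

lemma integrable_gaussPdf_mul_negDHext (h : LaplaceRegime D σ R a ν p) (s : ℝ) :
    Integrable fun v => gaussPdf σ v * negDHext D σ R (s - v) :=
  integrable_gaussPdf_mul h.σ_pos.le (measurable_negDHext D σ R) h.abs_negDHext_le s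

lemma one_third_le_width_div (h : LaplaceRegime D σ R a ν p) : 1 / 3 ≤ ν / √(ν ^ 2 + σ ^ 2) := by
  have hσ := h.σ_pos
  have ha := h.a_pos
  have hν := h.ν_pos
  have hp := h.p_pos
  have hwide : σ ^ 2 ≤ 8 * ν ^ 2 := by
    rw [h.width_sq, mul_div_assoc', le_div_iff₀ (by positivity)]
    calc σ ^ 2 * (2 * a ^ 2) ≤ σ ^ 2 * (2 * (7 / 4 * σ * p ^ 3) ^ 2) := by
          gcongr
          exact h.center_le
      _ ≤ 8 * (σ ^ 4 * p ^ 6) := by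
          nlinarith [show 0 < σ ^ 4 * p ^ 6 by positivity]
  rw [div_le_div_iff₀ three_pos (by positivity), one_mul]
  exact Real.sqrt_le_iff.2 ⟨by positivity, by linarith⟩

lemma exp_le_three_mul_gaussConv_gaussBump (h : LaplaceRegime D σ R a ν p)
    (hs : |s - a| ≤ σ * p / 6) :
    Real.exp (-(p ^ 2 / 72)) ≤ 3 * gaussConv σ (gaussBump a ν) s := by
  have hσ := h.σ_pos
  have hν := h.ν_pos
  have hbump : Real.exp (-(p ^ 2 / 72)) ≤ gaussBump a σ s := by
    rw [gaussBump, Real.exp_le_exp, neg_div, neg_le_neg_iff, div_le_iff₀ (by positivity)]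
    calc (s - a) ^ 2 = |s - a| ^ 2 := (sq_abs _).symm
      _ ≤ (σ * p / 6) ^ 2 := by gcongr
      _ = p ^ 2 / 72 * (2 * σ ^ 2) := by ring
  calc Real.exp (-(p ^ 2 / 72)) = 3 * (1 / 3 * Real.exp (-(p ^ 2 / 72))) := by ring
    _ ≤ 3 * (ν / √(ν ^ 2 + σ ^ 2) * gaussBump a σ s) := by
        gcongr ?_ * (?_ * ?_)
        exact h.one_third_le_width_div
    _ ≤ 3 * gaussConv σ (gaussBump a ν) s := by
        gcongr
        exact mul_gaussBump_le_gaussConv_gaussBump hσ hν a s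

lemma gaussConv_negDHext_le (h : LaplaceRegime D σ R a ν p) (hs : |s - a| ≤ σ * p / 6) :
    gaussConv σ (negDHext D σ R) s ≤
      9 * Real.exp 1 * (CofD D * (a / σ ^ 2) * gaussConv σ (gaussBump a ν) s) := by
  have hσ := h.σ_pos
  have hp := h.p_pos
  have hK := h.peak_pos
  set K := CofD D * (a / σ ^ 2)
  have hG := gaussConv_gaussBump_pos hσ h.ν_pos a s
  set G := gaussConv σ (gaussBump a ν) s
  have hdist : ∀ u ∈ Set.Iio (a - σ * p / 2), σ * p / 3 ≤ |s - u| := fun u hu =>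
    le_abs.2 (.inl (by linarith [(abs_le.1 hs).1, Set.mem_Iio.1 hu]))
  have htail : Real.exp (-((σ * p / 3) ^ 2 / (4 * σ ^ 2))) ≤ 3 * G := by
    refine le_trans (Real.exp_le_exp.2 ?_) (h.exp_le_three_mul_gaussConv_gaussBump hs)
    rw [show (σ * p / 3) ^ 2 / (4 * σ ^ 2) = p ^ 2 / 36 by field_simp; norm_num]
    linarith [sq_nonneg p]
  have hexp_two : Real.exp 2 = Real.exp 1 * Real.exp 1 := by rw [← Real.exp_add]; norm_num
  have hsqrt := sqrt_two_le_three_halves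
  calc gaussConv σ (negDHext D σ R) s
      ≤ K * Real.exp 2 * G + K * (√2 * Real.exp (-((σ * p / 3) ^ 2 / (4 * σ ^ 2)))) :=
        gaussConv_le_of_le_gaussBump_add_indicator hσ hK.le (by positivity) measurableSet_Iio
          hdist (h.integrable_gaussPdf_mul_negDHext s)
          fun u => (h.negDHext_le u).trans_eq (by ring)
    _ ≤ K * Real.exp 2 * G + K * (3 / 2 * (3 * G)) := by gcongr
    _ = (Real.exp 1 * Real.exp 1 + 9 / 2) * (K * G) := by
        rw [hexp_two]
        ring
    _ ≤ 9 * Real.exp 1 * (K * G) := by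
        gcongr
        nlinarith [Real.exp_one_gt_d9, Real.exp_one_lt_d9]

lemma five_mul_le_abs_sub (h : LaplaceRegime D σ R a ν p) (hs : |s - a| ≤ σ * p / 6)
    (hu : u < 0) : 5 * σ * p ^ 2 ≤ |s - u| := by
  have hp : p ≤ p ^ 2 := by nlinarith [h.le_scale_sq, h.p_pos]
  have hσp := mul_le_mul_of_nonneg_left hp h.σ_pos.le
  have : 0 < σ * p := mul_pos h.σ_pos h.p_pos
  exact le_abs.2 (.inl (by linarith [(abs_le.1 hs).1, h.le_center]))

lemma sqrt_two_mul_exp_window_le (h : LaplaceRegime D σ R a ν p) (hs : |s - a| ≤ σ * p / 6) :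
    √2 * Real.exp (-((σ * p / 2 - |s - a|) ^ 2 / (4 * σ ^ 2))) ≤ 1 / 2 := by
  have hσ := h.σ_pos
  have hσp : 0 < σ * p := mul_pos hσ h.p_pos
  calc √2 * Real.exp (-((σ * p / 2 - |s - a|) ^ 2 / (4 * σ ^ 2)))
      ≤ 3 / 2 * Real.exp (-((σ * p / 3) ^ 2 / (4 * σ ^ 2))) := by
        gcongr
        · exact sqrt_two_le_three_halves
        · linarith
    _ = 3 / 2 * Real.exp (-(p ^ 2 / 36)) := by
        congr 3
        field_simp
        ring
    _ ≤ 1 / 2 := by linarith [exp_neg_sq_div_le_one_third h.le_scale_sq]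

lemma sqrt_two_mul_exp_half_line_le (h : LaplaceRegime D σ R a ν p) (hs : |s - a| ≤ σ * p / 6) :
    √2 * Real.exp (-((5 * σ * p ^ 2) ^ 2 / (4 * σ ^ 2))) ≤
      9 / 40000 * gaussConv σ (gaussBump a ν) s := by
  have hσ := h.σ_pos
  rw [show (5 * σ * p ^ 2) ^ 2 / (4 * σ ^ 2) = 25 / 4 * p ^ 4 by field_simp; ring]
  have hsmall : Real.exp (-(25 / 4 * p ^ 4)) ≤ 3 * gaussConv σ (gaussBump a ν) s / 20000 := by
    linarith [exp_neg_mul_pow_four_le h.le_scale_sq, h.exp_le_three_mul_gaussConv_gaussBump hs]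
  calc √2 * Real.exp (-(25 / 4 * p ^ 4))
      ≤ 3 / 2 * (3 * gaussConv σ (gaussBump a ν) s / 20000) := by
        gcongr
        exact sqrt_two_le_three_halves
    _ = 9 / 40000 * gaussConv σ (gaussBump a ν) s := by ring

lemma le_gaussConv_negDHext (h : LaplaceRegime D σ R a ν p) (hs : |s - a| ≤ σ * p / 6) :
    1 / (16 * Real.exp 1) * (CofD D * (a / σ ^ 2) * gaussConv σ (gaussBump a ν) s) ≤
      gaussConv σ (negDHext D σ R) s := by
  have hσ := h.σ_pos
  have hp := h.p_pos
  have hσp : 0 < σ * p := mul_pos hσ hp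
  have hK := h.peak_pos
  set K := CofD D * (a / σ ^ 2)
  have hG := gaussConv_gaussBump_pos hσ h.ν_pos a s
  set G := gaussConv σ (gaussBump a ν) s
  calc 1 / (16 * Real.exp 1) * (K * G)
      ≤ (Real.exp (-2) / 2 * (1 - 1 / 2) - (Real.exp 2 + 1) * (9 / 40000)) * (K * G) := by
        gcongr
        exact one_div_sixteen_mul_exp_one_le
    _ = K * (Real.exp (-2) / 2) * (G * (1 - 1 / 2)) -
          K * (Real.exp 2 + 1) * (9 / 40000 * G) := by ring
    _ ≤ K * (Real.exp (-2) / 2) *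
            (G * (1 - √2 * Real.exp (-((σ * p / 2 - |s - a|) ^ 2 / (4 * σ ^ 2))))) -
          K * (Real.exp 2 + 1) * (√2 * Real.exp (-((5 * σ * p ^ 2) ^ 2 / (4 * σ ^ 2)))) := by
        gcongr K * (Real.exp (-2) / 2) * (G * (1 - ?_)) - K * (Real.exp 2 + 1) * ?_
        · exact h.sqrt_two_mul_exp_window_le hs
        · exact h.sqrt_two_mul_exp_half_line_le hs
    _ ≤ gaussConv σ (negDHext D σ R) s :=
        le_gaussConv_of_indicator_gaussBump_sub_indicator_le hσ h.ν_pos (by positivity)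
          (by positivity) (by positivity) (by linarith) measurableSet_Iio
          (fun u hu => h.five_mul_le_abs_sub hs hu) (h.integrable_gaussPdf_mul_negDHext s)
          fun u => (h.le_negDHext u).trans_eq' (by ring)

end LaplaceRegime

lemma laplaceRegime_of_log_six_bounds {D : ℕ} {σ R a : ℝ}
    (hD : (48 * Real.log 6) ^ 3 + 3 < (D : ℝ)) (hσ : 0 < σ) (hR : 0 < R) (ha : 0 < a)
    (hRa : R ^ 2 = a ^ 2 + σ ^ 2 * ((D : ℝ) - 3))
    (hlow : 24 * Real.log 6 * σ ^ 2 * (D : ℝ) ^ ((2 : ℝ) / 3) ≤ a ^ 2)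
    (hhigh : a ^ 2 ≤ 3 * σ ^ 2 * D) :
    LaplaceRegime D σ R a √(σ ^ 4 * ((D : ℝ) - 3) / (2 * a ^ 2))
      (((D : ℝ) - 3) ^ ((1 : ℝ) / 6)) := by
  have hlog := five_thirds_le_log_six
  have hm80 : 80 ^ 3 < (D : ℝ) - 3 := by
    have : (80 : ℝ) ^ 3 ≤ (48 * Real.log 6) ^ 3 := by gcongr; linarith
    linarith
  have hm : 0 < (D : ℝ) - 3 := lt_trans (by norm_num) hm80
  set p := ((D : ℝ) - 3) ^ ((1 : ℝ) / 6) with hp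
  have hp0 : 0 < p := by positivity
  have hp6 : (D : ℝ) - 3 = p ^ 6 := by
    rw [hp, ← Real.rpow_natCast, ← Real.rpow_mul hm.le]
    norm_num
  have hp4 : p ^ 4 ≤ (D : ℝ) ^ ((2 : ℝ) / 3) := by
    calc p ^ 4 = ((D : ℝ) - 3) ^ ((2 : ℝ) / 3) := by
          rw [hp, ← Real.rpow_natCast, ← Real.rpow_mul hm.le]
          norm_num
      _ ≤ (D : ℝ) ^ ((2 : ℝ) / 3) := by
          gcongr
          linarith
  refine ⟨hσ, hR, ha, by positivity, hp0, hp6, hp6 ▸ hRa, ?_, ?_, ?_, ?_⟩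
  · rw [Real.sq_sqrt (by positivity), hp6]
  · refine le_of_pow_le_pow_left₀ three_ne_zero (by positivity) ?_
    calc (80 : ℝ) ^ 3 ≤ p ^ 6 := hp6 ▸ hm80.le
      _ = (p ^ 2) ^ 3 := by ring
  · refine le_of_pow_le_pow_left₀ two_ne_zero ha.le ?_
    calc (6 * σ * p ^ 2) ^ 2 = 36 * σ ^ 2 * p ^ 4 := by ring
      _ ≤ 24 * Real.log 6 * σ ^ 2 * (D : ℝ) ^ ((2 : ℝ) / 3) := by gcongr; linarith
      _ ≤ a ^ 2 := hlow
  · refine le_of_pow_le_pow_left₀ two_ne_zero (by positivity) ?_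
    calc a ^ 2 ≤ σ ^ 2 * (3 * (D : ℝ)) := by linarith
      _ ≤ σ ^ 2 * (49 / 16 * p ^ 6) := by gcongr σ ^ 2 * ?_; linarith
      _ = (7 / 4 * σ * p ^ 3) ^ 2 := by ring

/-- **Upper and lower bounds on `φ ∗ (-h')`.**  With `s⋆ = √(R² - σ²(D-3))`,
`ν² = σ⁴(D-3)/(2s⋆²)`, `ν̄ = √(ν² + σ²)`, if `D > (48 log 6)³ + 3` and
`24 log 6 · σ² D^(2/3) ≤ s⋆² ≤ 3σ²D`, then for `|s - s⋆| ≤ (1/6)σ(D-3)^(1/6)`,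
`(1/(16e)) C(D) (ν/ν̄)(s⋆/σ²) exp(-(s-s⋆)²/(2ν̄²)) ≤ [φ ∗ (-h')](s)
  ≤ 9e C(D) (ν/ν̄)(s⋆/σ²) exp(-(s-s⋆)²/(2ν̄²))`. -/
theorem gauss_conv_neg_h_deriv_bounds (D : ℕ)
    (hD : (48 * Real.log 6) ^ 3 + 3 < (D : ℝ)) (σ R : ℝ)
    (hσ : 0 < σ) (hR : 0 < R) (hRD : σ ^ 2 * ((D : ℝ) - 3) < R ^ 2)
    (sstar ν νbar : ℝ)
    (hsstar : sstar = Real.sqrt (R ^ 2 - σ ^ 2 * ((D : ℝ) - 3)))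
    (hν : ν = Real.sqrt (σ ^ 4 * ((D : ℝ) - 3) / (2 * sstar ^ 2)))
    (hνbar : νbar = Real.sqrt (ν ^ 2 + σ ^ 2))
    (hlow : 24 * Real.log 6 * σ ^ 2 * (D : ℝ) ^ ((2 : ℝ) / 3) ≤ sstar ^ 2)
    (hhigh : sstar ^ 2 ≤ 3 * σ ^ 2 * D)
    (s : ℝ) (hs : |s - sstar| ≤ (1 / 6) * σ * ((D : ℝ) - 3) ^ ((1 : ℝ) / 6)) :
    (1 / (16 * Real.exp 1)) * CofD D * (ν / νbar) * (sstar / σ ^ 2) *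
        Real.exp (-(s - sstar) ^ 2 / (2 * νbar ^ 2)) ≤
      gaussConv σ (negDHext D σ R) s ∧
    gaussConv σ (negDHext D σ R) s ≤
      9 * Real.exp 1 * CofD D * (ν / νbar) * (sstar / σ ^ 2) *
        Real.exp (-(s - sstar) ^ 2 / (2 * νbar ^ 2)) := by
  have ha : 0 < sstar := hsstar ▸ Real.sqrt_pos.2 (sub_pos.2 hRD)
  have hR_sq : R ^ 2 = sstar ^ 2 + σ ^ 2 * ((D : ℝ) - 3) := by
    rw [hsstar, Real.sq_sqrt (sub_pos.2 hRD).le, sub_add_cancel]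
  have h := laplaceRegime_of_log_six_bounds hD hσ hR ha hR_sq hlow hhigh
  rw [← hν] at h
  have hconv (c : ℝ) : c * CofD D * (ν / νbar) * (sstar / σ ^ 2) *
      Real.exp (-(s - sstar) ^ 2 / (2 * νbar ^ 2)) =
        c * (CofD D * (sstar / σ ^ 2) * gaussConv σ (gaussBump sstar ν) s) := by
    rw [gaussConv_gaussBump hσ h.ν_pos, ← hνbar, gaussBump]
    ring
  rw [hconv, hconv]
  have hs' : |s - sstar| ≤ σ * ((D : ℝ) - 3) ^ ((1 : ℝ) / 6) / 6 := hs.trans_eq (by ring)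
  exact ⟨h.le_gaussConv_negDHext hs', h.gaussConv_negDHext_le hs'⟩
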